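/- Let occ(σ) be the number of occurrences in σ of the mesh pattern Nr. 17, where an occurrence is a pair of indices i < j with σ_i < σ_j such that: i = 1, σ_1 = 1, every element strictly between positions 1 and j has value less than σ_j, and every element after position j has value greater than σ_j. Let E(t,u) = Σ_{n≥0} t^n Σ_{σ∈K_n} u^{occ(σ)} and set D = 1 + t(1+u+ut) + t(1−u)·A(t). Then (1+t)·D·E(t,u) = (D + t(1+t)^2)·A(t) as formal power series in t over ℚ[u]. -/

import Mathlib

/-- A permutation of `{0, …, n-1}` is a *king permutation* if consecutive entries
differ by more than 1 in absolute value. -/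
def IsKing {n : ℕ} (σ : Equiv.Perm (Fin n)) : Prop :=
  ∀ i : Fin n, ∀ h : (i : ℕ) + 1 < n,
    1 < |((σ ⟨(i : ℕ) + 1, h⟩ : ℕ) : ℤ) - ((σ i : ℕ) : ℤ)|

/-- `kingCount n = A_n`, the number of king permutations of length `n`. -/
noncomputable def kingCount (n : ℕ) : ℕ :=
  Nat.card {σ : Equiv.Perm (Fin n) // IsKing σ}

/-- `A(t)` regarded as a power series over `ℚ[u]` (constant-polynomial coefficients). -/
noncomputable def kingAu : PowerSeries (Polynomial ℚ) :=
  PowerSeries.mk fun n => (kingCount n : Polynomial ℚ)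

/-- `u` viewed as a constant power series over `ℚ[u]`. -/
noncomputable def U : PowerSeries (Polynomial ℚ) :=
  PowerSeries.C (R := Polynomial ℚ) Polynomial.X

/-- `t`, the power series variable. -/
noncomputable def T : PowerSeries (Polynomial ℚ) :=
  PowerSeries.X

/-- An occurrence of the mesh pattern Nr. 17 in `σ`. -/
def OccP {n : ℕ} (σ : Equiv.Perm (Fin n)) (i j : Fin n) : Prop :=
  i < j ∧ σ i < σ j ∧
    (∀ k : Fin n, ¬ k < i) ∧ (σ i : ℕ) = 0 ∧
    (∀ k : Fin n, i < k → k < j → σ k < σ j) ∧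
    (∀ k : Fin n, j < k → σ j < σ k)

/-- The number of occurrences of the mesh pattern Nr. 17 in `σ`. -/
noncomputable def occP {n : ℕ} (σ : Equiv.Perm (Fin n)) : ℕ :=
  Nat.card {p : Fin n × Fin n // OccP σ p.1 p.2}

-- `E(t,u) = Σ_{n≥0} t^n Σ_{σ∈K_n} u^{occ(σ)}`, a power series in `t` over `ℚ[u]`.
open Classical in
noncomputable def Etu : PowerSeries (Polynomial ℚ) :=
  PowerSeries.mk fun n =>
    ∑ σ : Equiv.Perm (Fin n),
      if IsKing σ then (Polynomial.X : Polynomial ℚ) ^ occP σ else 0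


namespace King13

open Polynomial

/-- The permutation as a function on all naturals. -/
def ap {n : ℕ} (σ : Equiv.Perm (Fin n)) (k : ℕ) : ℕ :=
  if h : k < n then (σ ⟨k, h⟩ : ℕ) else k

lemma ap_of_lt {n : ℕ} (σ : Equiv.Perm (Fin n)) {k : ℕ} (h : k < n) :
    ap σ k = (σ ⟨k, h⟩ : ℕ) := by simp [ap, h]

lemma ap_fin {n : ℕ} (σ : Equiv.Perm (Fin n)) (k : Fin n) :
    ap σ k = (σ k : ℕ) := by simp [ap]

lemma ap_lt {n : ℕ} (σ : Equiv.Perm (Fin n)) {k : ℕ} (h : k < n) : ap σ k < n := by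
  rw [ap_of_lt σ h]; exact (σ ⟨k, h⟩).2

lemma ap_inj {n : ℕ} (σ : Equiv.Perm (Fin n)) {k l : ℕ} (hk : k < n) (hl : l < n)
    (h : ap σ k = ap σ l) : k = l := by
  rw [ap_of_lt σ hk, ap_of_lt σ hl] at h
  have := σ.injective (Fin.ext h)
  simpa using this

lemma ap_ext {n : ℕ} {σ τ : Equiv.Perm (Fin n)} (h : ∀ k < n, ap σ k = ap τ k) : σ = τ := by
  ext k
  have := h k k.2
  rwa [ap_fin, ap_fin] at this

lemma isKing_iff {n : ℕ} (σ : Equiv.Perm (Fin n)) :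
    IsKing σ ↔ ∀ i, i + 1 < n → ap σ i + 1 < ap σ (i + 1) ∨ ap σ (i + 1) + 1 < ap σ i := by
  constructor
  · intro h i hi
    have := h ⟨i, by omega⟩ hi
    rw [lt_abs] at this
    rw [ap_of_lt σ hi, ap_of_lt σ (show i < n by omega)]
    simp only at this
    omega
  · intro h i hi
    have := h i hi
    rw [ap_of_lt σ hi, ap_fin] at this
    rw [lt_abs]
    omega

def StartZ {n : ℕ} (σ : Equiv.Perm (Fin n)) : Prop := 0 < n ∧ ap σ 0 = 0

def EndMax {n : ℕ} (σ : Equiv.Perm (Fin n)) : Prop := ap σ (n - 1) + 1 = n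

def SF {n : ℕ} (σ : Equiv.Perm (Fin n)) (p : ℕ) : Prop :=
  p < n ∧ ap σ p = p ∧ ∀ k < p, ap σ k < p

def dsum {m r : ℕ} (τ : Equiv.Perm (Fin m)) (ρ : Equiv.Perm (Fin r)) :
    Equiv.Perm (Fin (m + r)) :=
  finSumFinEquiv.permCongr (Equiv.Perm.sumCongr τ ρ)

lemma ap_dsum {m r : ℕ} (τ : Equiv.Perm (Fin m)) (ρ : Equiv.Perm (Fin r)) (k : ℕ) :
    ap (dsum τ ρ) k = if k < m then ap τ k else m + ap ρ (k - m) := by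
  by_cases h : k < m + r
  · rw [ap_of_lt _ h]
    split_ifs with h1
    · have : (⟨k, h⟩ : Fin (m + r)) = finSumFinEquiv (Sum.inl ⟨k, h1⟩) := by
        ext; simp
      rw [this, ap_of_lt _ h1]
      rw [dsum, Equiv.permCongr_apply, Equiv.symm_apply_apply]
      simp
    · have : (⟨k, h⟩ : Fin (m + r)) = finSumFinEquiv (Sum.inr ⟨k - m, by omega⟩) := by
        ext; simp; omega
      rw [this, ap_of_lt _ (show k - m < r by omega)]
      rw [dsum, Equiv.permCongr_apply, Equiv.symm_apply_apply]
      simp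
  · have h1 : ¬ k < m := by omega
    have h2 : ¬ k - m < r := by omega
    simp [ap, h, h1, h2]
    omega

lemma dsum_inj {m r : ℕ} :
    Function.Injective (fun x : Equiv.Perm (Fin m) × Equiv.Perm (Fin r) => dsum x.1 x.2) := by
  rintro ⟨τ, ρ⟩ ⟨τ', ρ'⟩ h
  simp only at h
  have h' : ∀ k, ap (dsum τ ρ) k = ap (dsum τ' ρ') k := by rw [h]; simp
  simp only [ap_dsum] at h'
  congr 1
  · apply ap_ext
    intro k hk
    simpa [hk] using h' k
  · apply ap_ext
    intro k hk
    simpa using h' (m + k)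

lemma dsum_surj {m r : ℕ} (σ : Equiv.Perm (Fin (m + r))) (h : ∀ k < m, ap σ k < m) :
    ∃ τ ρ, dsum (m := m) (r := r) τ ρ = σ := by
  have : (finSumFinEquiv.symm.permCongr σ : Equiv.Perm (Fin m ⊕ Fin r)) ∈
      (Equiv.Perm.sumCongrHom (Fin m) (Fin r)).range := by
    apply Equiv.Perm.mem_sumCongrHom_range_of_perm_mapsTo_inl
    rintro _ ⟨a, rfl⟩
    have ha := h a a.2
    rw [ap_of_lt σ (show (a : ℕ) < m + r by omega)] at ha
    refine ⟨⟨_, ha⟩, ?_⟩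
    rw [Equiv.permCongr_apply, ← Equiv.symm_apply_eq]
    ext
    simp
    rfl
  obtain ⟨⟨τ, ρ⟩, h⟩ := this
  refine ⟨τ, ρ, ?_⟩
  have h2 : Equiv.Perm.sumCongr τ ρ = finSumFinEquiv.symm.permCongr σ := h
  rw [dsum, h2]
  ext
  simp [Equiv.permCongr_apply]

lemma sum_dsum {m r : ℕ} {R : Type*} [AddCommMonoid R] (g : Equiv.Perm (Fin (m + r)) → R)
    (hg : ∀ σ, g σ ≠ 0 → ∀ k < m, ap σ k < m) :
    ∑ σ, g σ = ∑ τ : Equiv.Perm (Fin m), ∑ ρ : Equiv.Perm (Fin r), g (dsum τ ρ) := by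
  rw [← Fintype.sum_prod_type' (fun τ ρ => g (dsum τ ρ))]
  symm
  apply Finset.sum_of_injOn (fun x : Equiv.Perm (Fin m) × Equiv.Perm (Fin r) => dsum x.1 x.2)
  · exact dsum_inj.injOn
  · simp
  · intro σ _ hσ
    by_contra hne
    obtain ⟨τ, ρ, h⟩ := dsum_surj σ (hg σ hne)
    exact hσ ⟨(τ, ρ), by simp, h⟩
  · simp

lemma isKing_dsum {m r : ℕ} (τ : Equiv.Perm (Fin m)) (ρ : Equiv.Perm (Fin r)) :
    IsKing (dsum τ ρ) ↔ IsKing τ ∧ IsKing ρ ∧ ¬ (EndMax τ ∧ StartZ ρ) := by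
  simp only [isKing_iff, ap_dsum]
  constructor
  · intro h
    refine ⟨?_, ?_, ?_⟩
    · intro i hi
      have := h i (by omega)
      simpa [hi, show i < m by omega] using this
    · intro i hi
      have := h (m + i) (by omega)
      simp [show ¬ m + i + 1 < m by omega, show m + i + 1 - m = i + 1 by omega] at this
      omega
    · rintro ⟨h1, h2, h3⟩
      unfold EndMax at h1
      have hm : 0 < m := by omega
      have := h (m - 1) (by omega)
      simp [show m - 1 < m by omega, show m - 1 + 1 = m by omega, h3] at this
      omega
  · rintro ⟨h1, h2, h3⟩ i hi
    by_cases ha : i + 1 < m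
    · simpa [ha, show i < m by omega] using h1 i ha
    · by_cases hb : i < m
      · have hi' : i = m - 1 := by omega
        have hr : 0 < r := by omega
        simp only [hb, ha, if_true, if_false, show i + 1 - m = 0 by omega]
        have := ap_lt τ hb
        simp only [EndMax, StartZ, ← hi', hr, true_and] at h3
        omega
      · simp only [hb, ha, if_false]
        have := h2 (i - m) (by omega)
        rw [show i + 1 - m = i - m + 1 by omega]
        omega

lemma startZ_dsum {m r : ℕ} (τ : Equiv.Perm (Fin m)) (ρ : Equiv.Perm (Fin r)) (hm : 0 < m) :
    StartZ (dsum τ ρ) ↔ StartZ τ := by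
  simp only [StartZ, ap_dsum, hm, if_true]
  simp; omega

lemma startZ_dsum_zero {r : ℕ} (τ : Equiv.Perm (Fin 0)) (ρ : Equiv.Perm (Fin r)) :
    StartZ (dsum τ ρ) ↔ StartZ ρ := by
  simp [StartZ, ap_dsum]

lemma endMax_dsum {m r : ℕ} (τ : Equiv.Perm (Fin m)) (ρ : Equiv.Perm (Fin r)) (hr : 0 < r) :
    EndMax (dsum τ ρ) ↔ EndMax ρ := by
  simp only [EndMax, ap_dsum, show ¬ m + r - 1 < m by omega, if_false,
    show m + r - 1 - m = r - 1 by omega]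
  omega

/-- A strong fixed point of a direct sum, in the second summand. -/
lemma sf_dsum {m r : ℕ} (τ : Equiv.Perm (Fin m)) (ρ : Equiv.Perm (Fin r)) (p : ℕ) :
    SF (dsum τ ρ) (m + p) ↔ SF ρ p := by
  simp only [SF, ap_dsum]
  constructor
  · rintro ⟨h1, h2, h3⟩
    refine ⟨by omega, ?_, ?_⟩
    · simpa using h2
    · intro k hk
      simpa using h3 (m + k) (by omega)
  · rintro ⟨h1, h2, h3⟩
    refine ⟨by omega, by simpa using h2, ?_⟩
    intro k hk
    split_ifs with h
    · have := ap_lt τ h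
      omega
    · have := h3 (k - m) (by omega)
      omega

lemma sf_zero {n : ℕ} (σ : Equiv.Perm (Fin n)) : SF σ 0 ↔ StartZ σ := by
  simp [SF, StartZ]

lemma endMax_zero (σ : Equiv.Perm (Fin 0)) : ¬ EndMax σ := by
  simp [EndMax]

lemma startZ_zero (σ : Equiv.Perm (Fin 0)) : ¬ StartZ σ := by
  simp [StartZ]

lemma isKing_one (σ : Equiv.Perm (Fin 1)) : IsKing σ := by
  rw [isKing_iff]; intro i hi; omega

lemma isKing_zero (σ : Equiv.Perm (Fin 0)) : IsKing σ := by
  rw [isKing_iff]; intro i hi; omega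

lemma startZ_one (σ : Equiv.Perm (Fin 1)) : StartZ σ := by
  have := ap_lt σ (show 0 < 1 by omega)
  exact ⟨by omega, by omega⟩

lemma endMax_one (σ : Equiv.Perm (Fin 1)) : EndMax σ := by
  have := ap_lt σ (show 0 < 1 by omega)
  simp only [EndMax]
  simp; omega

open Classical in
/-- positive strong fixed points beyond `q` -/
noncomputable def sfs {n : ℕ} (σ : Equiv.Perm (Fin n)) (q : ℕ) : Finset ℕ :=
  (Finset.range n).filter fun p => q < p ∧ SF σ p

lemma mem_sfs {n : ℕ} (σ : Equiv.Perm (Fin n)) (q p : ℕ) :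
    p ∈ sfs σ q ↔ q < p ∧ SF σ p := by
  simp only [sfs, Finset.mem_filter, Finset.mem_range]
  exact ⟨fun h => h.2, fun h => ⟨h.2.1, h⟩⟩

lemma card_sfs_dsum {m r : ℕ} (τ : Equiv.Perm (Fin m)) (ρ : Equiv.Perm (Fin r)) :
    (sfs (dsum τ ρ) m).card = (sfs ρ 0).card := by
  symm
  rw [← Finset.card_map (addLeftEmbedding m)]
  congr 1
  ext p
  simp only [Finset.mem_map, mem_sfs, addLeftEmbedding_apply]
  constructor
  · rintro ⟨a, ⟨h1, h2⟩, rfl⟩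
    exact ⟨by omega, (sf_dsum τ ρ a).2 h2⟩
  · rintro ⟨h1, h2⟩
    refine ⟨p - m, ⟨by omega, ?_⟩, by omega⟩
    rw [← sf_dsum τ ρ, show m + (p - m) = p by omega]
    exact h2

lemma pow_card_eq (S : Finset ℕ) :
    (X : ℚ[X]) ^ S.card = 1 + (X - 1) * ∑ p ∈ S, X ^ (S.filter (p < ·)).card := by
  induction S using Finset.induction_on_min with
  | empty => simp
  | insert a s h ih =>
    have ha : a ∉ s := fun h' => lt_irrefl _ (h a h')
    rw [Finset.card_insert_of_notMem ha, Finset.sum_insert ha]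
    have h1 : (insert a s).filter (a < ·) = s := by
      ext x
      simp only [Finset.mem_filter, Finset.mem_insert]
      constructor
      · rintro ⟨rfl | h1, h2⟩
        · omega
        · exact h1
      · intro h1
        exact ⟨Or.inr h1, h x h1⟩
    have h2 : ∀ p ∈ s, (X : ℚ[X]) ^ ((insert a s).filter (p < ·)).card
        = X ^ (s.filter (p < ·)).card := by
      intro p hp
      congr 2
      rw [Finset.filter_insert, if_neg]
      have := h p hp
      omega
    rw [h1, Finset.sum_congr rfl h2]
    linear_combination ih

lemma fixed_of_split {n : ℕ} (σ : Equiv.Perm (Fin n)) (j : Fin n)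
    (h1 : ∀ k, k < j → σ k < σ j) (h2 : ∀ k, j < k → σ j < σ k) : σ j = j := by
  have : (Finset.Iio j).map σ.toEmbedding = Finset.Iio (σ j) := by
    ext x
    simp only [Finset.mem_map_equiv, Finset.mem_Iio]
    constructor
    · intro h
      simpa using h1 _ h
    · intro h
      by_contra h'
      rcases eq_or_lt_of_le (not_lt.mp h') with h3 | h3
      · rw [h3] at h; simp at h
      · have := h2 _ h3
        simp at this
        exact lt_asymm h this
  have := congrArg Finset.card this
  simp at this
  exact Fin.ext this.symm

lemma occ_iff {n : ℕ} (σ : Equiv.Perm (Fin n)) (i j : Fin n) :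
    OccP σ i j ↔ StartZ σ ∧ (i : ℕ) = 0 ∧ 0 < (j : ℕ) ∧ SF σ j := by
  have hn : 0 < n := by have := i.2; omega
  constructor
  · rintro ⟨h1, h2, h3, h4, h5, h6⟩
    have hi : (i : ℕ) = 0 := by
      by_contra h
      exact h3 ⟨0, hn⟩ (Fin.lt_def.2 (by simp; omega))
    have hlt : ∀ k, k < j → σ k < σ j := by
      intro k hk
      by_cases hki : i < k
      · exact h5 k hki hk
      · have : k = i := by
          ext
          have := Fin.lt_def.not.1 hki
          omega
        rw [this]; exact h2
    have hj := fixed_of_split σ j hlt h6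
    refine ⟨⟨hn, ?_⟩, hi, ?_, ?_⟩
    · rw [← hi, ap_fin, h4, hi]
    · have := Fin.lt_def.1 h1
      omega
    · refine ⟨j.2, by rw [ap_fin, hj], ?_⟩
      intro k hk
      have := hlt ⟨k, by omega⟩ (Fin.lt_def.2 hk)
      rw [ap_of_lt σ (show k < n by omega)]
      rw [hj] at this
      exact this
  · rintro ⟨⟨h0, h0'⟩, hi, hj, h1, h2, h3⟩
    have hlt : ∀ k, k < j → σ k < σ j := by
      intro k hk
      have := h3 k hk
      rw [Fin.lt_def, ← ap_fin, ← ap_fin]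
      omega
    refine ⟨Fin.lt_def.2 (by omega), hlt _ (Fin.lt_def.2 (by omega)), ?_, ?_, fun k _ => hlt k, ?_⟩
    · intro k hk
      have := Fin.lt_def.1 hk
      omega
    · rw [← ap_fin, hi, h0']
    · intro k hk
      -- pigeonhole: the first `j+1` positions are mapped onto the first `j+1` values
      have hmap : ((Finset.Iic j).map σ.toEmbedding) = Finset.Iic j := by
        apply Finset.eq_of_subset_of_card_le
        · intro x hx
          simp only [Finset.mem_map_equiv, Finset.mem_Iic] at hx
          rw [Finset.mem_Iic]
          have hσj : σ j = j := Fin.ext (by rw [← ap_fin]; exact h2)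
          rcases eq_or_lt_of_le hx with h | h
          · rw [Equiv.symm_apply_eq] at h
            rw [h, hσj]
          · have := hlt _ h
            simp [hσj] at this
            exact this.le
        · simp
      by_contra hc
      have hσj : σ j = j := Fin.ext (by rw [← ap_fin]; exact h2)
      have : σ k ∈ Finset.Iic j := by
        rw [Finset.mem_Iic, ← hσj]; exact not_lt.mp hc
      rw [← hmap] at this
      simp at this
      exact absurd hk (not_lt.mpr this)

lemma occP_of_not {n : ℕ} (σ : Equiv.Perm (Fin n)) (h : ¬ StartZ σ) : occP σ = 0 := by
  unfold occP
  simp only [occ_iff, h, false_and]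
  simp

lemma occP_eq {n : ℕ} (σ : Equiv.Perm (Fin n)) (h : StartZ σ) : occP σ = (sfs σ 0).card := by
  classical
  unfold occP
  rw [Nat.card_eq_fintype_card, Fintype.card_subtype]
  apply Finset.card_bij (fun p _ => (p.2 : ℕ))
  · intro p hp
    simp only [Finset.mem_filter, Finset.mem_univ, true_and, occ_iff] at hp
    exact (mem_sfs _ _ _).2 hp.2.2
  · intro p hp q hq hpq
    simp only [Finset.mem_filter, Finset.mem_univ, true_and, occ_iff] at hp hq
    ext
    · omega
    · exact hpq
  · intro p hp
    rw [mem_sfs] at hp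
    refine ⟨(⟨0, h.1⟩, ⟨p, hp.2.1⟩), ?_, rfl⟩
    simp only [Finset.mem_filter, Finset.mem_univ, true_and, occ_iff]
    exact ⟨h, hp⟩

section
open Classical

noncomputable def ca (n : ℕ) : ℚ[X] := ∑ σ : Equiv.Perm (Fin n), if IsKing σ then 1 else 0

noncomputable def cb (n : ℕ) : ℚ[X] :=
  ∑ σ : Equiv.Perm (Fin n), if IsKing σ ∧ StartZ σ then 1 else 0

noncomputable def cq (n : ℕ) : ℚ[X] :=
  ∑ σ : Equiv.Perm (Fin n), if IsKing σ ∧ StartZ σ ∧ ¬ EndMax σ then 1 else 0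

noncomputable def cf (n : ℕ) : ℚ[X] :=
  ∑ σ : Equiv.Perm (Fin n), if IsKing σ ∧ StartZ σ then X ^ (sfs σ 0).card else 0

lemma ca_eq (n : ℕ) : (kingCount n : ℚ[X]) = ca n := by
  unfold kingCount ca
  rw [Nat.card_eq_fintype_card, Fintype.card_subtype, Finset.sum_boole]

lemma ce_eq (n : ℕ) : (∑ σ : Equiv.Perm (Fin n),
      if IsKing σ then (Polynomial.X : Polynomial ℚ) ^ occP σ else 0) = ca n - cb n + cf n := by
  unfold ca cb cf
  rw [← Finset.sum_sub_distrib, ← Finset.sum_add_distrib]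
  apply Finset.sum_congr rfl
  intro σ _
  by_cases h1 : IsKing σ <;> by_cases h2 : StartZ σ
  · simp [h1, h2, occP_eq]
  · simp [h1, h2, occP_of_not]
  · simp [h1]
  · simp [h1]

lemma cb_zero : cb 0 = 0 := by
  simp [cb, startZ_zero]

lemma cb_succ (n : ℕ) : cb (n + 1) = ca n - cb n := by
  rw [add_comm, cb, sum_dsum]
  · rw [Fintype.sum_unique, ca, cb, ← Finset.sum_sub_distrib]
    apply Finset.sum_congr rfl
    intro ρ _
    simp only [isKing_dsum, startZ_dsum _ _ Nat.one_pos, isKing_one, endMax_one, startZ_one]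
    by_cases h1 : IsKing ρ <;> by_cases h2 : StartZ ρ <;> simp [h1, h2]
  · intro σ hσ k hk
    have h : IsKing σ ∧ StartZ σ := by
      by_contra h; simp [h] at hσ
    rw [show k = 0 by omega, h.2.2]; omega

lemma cq_zero : cq 0 = 0 := by
  simp [cq, startZ_zero]

lemma cbq (n : ℕ) : cb n - cq n =
    ∑ σ : Equiv.Perm (Fin n), if IsKing σ ∧ StartZ σ ∧ EndMax σ then (1 : ℚ[X]) else 0 := by
  rw [cb, cq, ← Finset.sum_sub_distrib]
  apply Finset.sum_congr rfl
  intro σ _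
  by_cases h1 : IsKing σ <;> by_cases h2 : StartZ σ <;> by_cases h3 : EndMax σ <;>
    simp [h1, h2, h3]

lemma cbq_succ (n : ℕ) : cb (n + 1) - cq (n + 1) = (if n = 0 then 1 else 0) + cq n := by
  rw [cbq, sum_dsum]
  · simp only [Fintype.sum_unique]
    rcases Nat.eq_zero_or_pos n with rfl | hn
    · rw [cq_zero, Fintype.sum_unique]
      simp [isKing_dsum, startZ_dsum_zero, endMax_dsum, isKing_one, isKing_zero, startZ_one,
        endMax_one, endMax_zero]
    · rw [if_neg (by omega), zero_add, cq]
      apply Finset.sum_congr rfl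
      intro τ _
      simp only [isKing_dsum, startZ_dsum _ _ hn, endMax_dsum _ _ Nat.one_pos, isKing_one,
        startZ_one, endMax_one]
      by_cases h1 : IsKing τ <;> by_cases h2 : StartZ τ <;> by_cases h3 : EndMax τ <;>
        simp [h1, h2, h3]
  · intro σ hσ k hk
    have h : IsKing σ ∧ StartZ σ ∧ EndMax σ := by
      by_contra h; simp [h] at hσ
    have h1 := ap_lt σ (show k < n + 1 by omega)
    by_contra h2
    have h3 : ap σ k = ap σ n := by
      have := h.2.2
      simp only [EndMax, Nat.add_sub_cancel] at this
      omega
    have := ap_inj σ (by omega) (by omega) h3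
    omega

lemma split_term (m r : ℕ) (n : ℕ) (hn : m + r = n) :
    (∑ σ : Equiv.Perm (Fin n), if IsKing σ ∧ StartZ σ ∧ 0 < m ∧ SF σ m then
      (X : ℚ[X]) ^ (sfs σ m).card else 0) = cq m * cf r := by
  subst hn
  rcases Nat.eq_zero_or_pos m with rfl | hm
  · simp [cq_zero]
  rw [sum_dsum]
  · rw [cq, cf, Finset.sum_mul_sum]
    apply Finset.sum_congr rfl
    intro τ _
    apply Finset.sum_congr rfl
    intro ρ _
    have hsf : SF (dsum τ ρ) m ↔ StartZ ρ := by
      rw [← sf_zero, ← sf_dsum τ ρ 0, add_zero]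
    simp only [isKing_dsum, startZ_dsum _ _ hm, hsf, card_sfs_dsum, hm]
    by_cases h1 : IsKing τ <;> by_cases h2 : StartZ τ <;> by_cases h3 : EndMax τ <;>
      by_cases h4 : IsKing ρ <;> by_cases h5 : StartZ ρ <;> simp [h1, h2, h3, h4, h5]
  · intro σ hσ
    have h : IsKing σ ∧ StartZ σ ∧ 0 < m ∧ SF σ m := by
      by_contra h; simp [h] at hσ
    exact h.2.2.2.2.2

lemma cf_rec (n : ℕ) : cf n = cb n + (X - 1) *
    ∑ p ∈ Finset.HasAntidiagonal.antidiagonal n, cq p.1 * cf p.2 := by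
  have h1 : ∀ p ∈ Finset.HasAntidiagonal.antidiagonal n, cq p.1 * cf p.2 =
      ∑ σ : Equiv.Perm (Fin n), if IsKing σ ∧ StartZ σ ∧ 0 < p.1 ∧ SF σ p.1 then
      (X : ℚ[X]) ^ (sfs σ p.1).card else 0 := by
    intro p hp
    rw [split_term p.1 p.2 n (by simpa using hp)]
  rw [Finset.sum_congr rfl h1, Finset.sum_comm, cb, cf, Finset.mul_sum, ← Finset.sum_add_distrib]
  apply Finset.sum_congr rfl
  intro σ _
  by_cases h : IsKing σ ∧ StartZ σ
  · simp only [h.1, h.2, true_and, and_self, if_true]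
    rw [pow_card_eq]
    congr 2
    rw [Finset.Nat.sum_antidiagonal_eq_sum_range_succ
      (fun a _ => if 0 < a ∧ SF σ a then (X : ℚ[X]) ^ (sfs σ a).card else 0)]
    rw [← Finset.sum_filter]
    have h2 : (Finset.range n.succ).filter (fun a => 0 < a ∧ SF σ a) = sfs σ 0 := by
      ext p
      simp only [mem_sfs, Finset.mem_filter, Finset.mem_range]
      exact ⟨fun h => h.2, fun h => ⟨by have := h.2.1; omega, h⟩⟩
    rw [h2]
    apply Finset.sum_congr rfl
    intro p hp
    congr 2
    ext x
    simp only [mem_sfs, Finset.mem_filter]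
    rw [mem_sfs] at hp
    constructor
    · exact fun h => ⟨h.2, h.1.2⟩
    · exact fun h => ⟨⟨by omega, h.2⟩, h.1⟩
  · have h' : ∀ a : Prop, ¬ (IsKing σ ∧ StartZ σ ∧ a) := fun a h2 => h ⟨h2.1, h2.2.1⟩
    simp [h, h']

noncomputable def sB : PowerSeries ℚ[X] := PowerSeries.mk cb
noncomputable def sQ : PowerSeries ℚ[X] := PowerSeries.mk cq
noncomputable def sF : PowerSeries ℚ[X] := PowerSeries.mk cf

lemma eqB : sB = T * (kingAu - sB) := by
  ext1 n
  cases n with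
  | zero => simp [sB, T, cb_zero]
  | succ n => simp [sB, T, kingAu, PowerSeries.coeff_succ_X_mul, cb_succ, ca_eq]

lemma eqQ : sB - sQ = T * (1 + sQ) := by
  ext1 n
  cases n with
  | zero => simp [sB, sQ, T, cb_zero, cq_zero]
  | succ n =>
    simp [sB, sQ, T, PowerSeries.coeff_succ_X_mul, cbq_succ, PowerSeries.coeff_one]

lemma eqF : sF = sB + (U - 1) * (sQ * sF) := by
  ext1 n
  have : (U - 1 : PowerSeries ℚ[X]) = PowerSeries.C (X - 1 : ℚ[X]) := by simp [U]
  rw [this, map_add, PowerSeries.coeff_C_mul, PowerSeries.coeff_mul]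
  simp only [sB, sQ, sF, PowerSeries.coeff_mk]
  exact cf_rec n

lemma eqE : Etu = kingAu - sB + sF := by
  ext1 n
  simp only [Etu, kingAu, sB, sF, map_add, map_sub, PowerSeries.coeff_mk, ca_eq]
  exact ce_eq n

end

end King13

theorem statement_13 :
    (1 + T) * (1 + T * (1 + U + U * T) + T * (1 - U) * kingAu) * Etu
      = ((1 + T * (1 + U + U * T) + T * (1 - U) * kingAu) + T * (1 + T) ^ 2)
          * kingAu := by
  have hB := King13.eqB
  have hQ := King13.eqQ
  have hF := King13.eqF
  rw [King13.eqE]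
  set A := kingAu
  set B := King13.sB
  set Q := King13.sQ
  set F := King13.sF
  have hD : (1 + T * (1 + U + U * T) + T * (1 - U) * A) = (1 + T) ^ 2 * (1 + (1 - U) * Q) := by
    linear_combination (1 - U) * (1 + T) * hQ - (1 - U) * hB
  have hDF : (1 + T * (1 + U + U * T) + T * (1 - U) * A) * F = (1 + T) ^ 2 * B := by
    rw [hD]
    linear_combination (1 + T) ^ 2 * hF
  linear_combination (1 + T) * hDF +
    (-(1 + T * (1 + U + U * T) + T * (1 - U) * A) + (1 + T) ^ 2) * hB
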